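/- arXiv:1705.01171 — 2 statements merged into one kernel-verified Lean document; each statement's English description precedes it below -/
import Mathlib

section
/- Let $d \ge 1$ and let $X \subseteq \mathbb{R}^d$ be a finite nonempty acute set. Then there exists a finite acute set $Y \subseteq \mathbb{R}^{d+2}$ with $|Y| = 2|X|$. (Equivalently, $f(d+2) \ge 2 f(d)$, where $f(d)$ denotes the maximum size of an acute set in $\mathbb{R}^d$.) -/
open RealInnerProductSpace

/-- A finite set of points in a real inner product space is *acute* if any three
distinct points of it form an acute angle. -/
def IsAcuteSet {E : Type*} [NormedAddCommGroup E] [InnerProductSpace ℝ E]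
    (X : Finset E) : Prop :=
  ∀ x ∈ X, ∀ y ∈ X, ∀ z ∈ X, y ≠ x → z ≠ x → y ≠ z → 0 < ⟪y - x, z - x⟫

/-!
Replace each point `x` of `X` by the two points `(x, v x)` and `(x, -v x)`, where the `v x` are
pairwise linearly independent vectors of a common length `ε`, so short that the finitely many inner
products witnessing the acuteness of `X` are at least `2 * ε ^ 2`. For three new points over
distinct points of `X`, such an inner product is perturbed by more than `-2 * ε ^ 2`.
If the vertex and one other point lie over the same `x`, only the perturbation remains; it equals
`2 * (ε ^ 2 - ⟪v x, w⟫)` with `w` the last coordinate of the third point, and is positive by strict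
Cauchy–Schwarz. If the two points other than the vertex lie over the same point, the perturbation
vanishes because all perturbing vectors have the same length.
-/

section LinearIndependent

lemma exists_pairwise_linearIndependent_of_one_lt_rank {K V : Type*} [Field K] [AddCommGroup V]
    [Module K V] (hV : 1 < Module.rank K V) :
    ∃ w : K → V, Pairwise fun s t ↦ LinearIndependent K ![w s, w t] := by
  have : Nontrivial V := rank_pos_iff_nontrivial.mp (zero_lt_one.trans hV)
  obtain ⟨a, ha⟩ := exists_ne (0 : V)
  obtain ⟨b, hab⟩ := exists_linearIndependent_pair_of_one_lt_rank hV ha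
  refine ⟨fun t ↦ (1 : K) • a + t • b, fun s t hst ↦ ?_⟩
  refine (LinearIndependent.pair_add_smul_add_smul_iff ..).mpr ⟨hab, ?_⟩
  simpa only [one_mul, mul_one] using hst.symm

variable {F : Type*} [NormedAddCommGroup F]

lemma exists_norm_eq_pairwise_linearIndependent [NormedSpace ℝ F] (hF : 1 < Module.rank ℝ F)
    {ε : ℝ} (hε : 0 < ε) :
    ∃ w : ℝ → F, (∀ t, ‖w t‖ = ε) ∧ Pairwise fun s t ↦ LinearIndependent ℝ ![w s, w t] := by
  obtain ⟨w, hw⟩ := exists_pairwise_linearIndependent_of_one_lt_rank hF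
  have norm_ne_zero (t : ℝ) : ‖w t‖ ≠ 0 :=
    norm_ne_zero_iff.mpr ((hw (lt_add_one t).ne).ne_zero 0)
  refine ⟨fun t ↦ (ε / ‖w t‖) • w t, fun t ↦ ?_, fun s t hst ↦ ?_⟩
  · rw [norm_smul, norm_div, norm_norm, Real.norm_of_nonneg hε.le,
      div_mul_cancel₀ _ (norm_ne_zero t)]
  · have isUnit_scale (t : ℝ) : IsUnit (ε / ‖w t‖) := (div_ne_zero hε.ne' (norm_ne_zero t)).isUnit
    exact (LinearIndependent.pair_smul_smul_iff (isUnit_scale s) (isUnit_scale t)).mpr (hw hst)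

lemma abs_real_inner_lt_norm_mul_norm [InnerProductSpace ℝ F] {a b : F}
    (h : LinearIndependent ℝ ![a, b]) : |⟪a, b⟫| < ‖a‖ * ‖b‖ := by
  have ha : a ≠ 0 := h.ne_zero 0
  refine (abs_real_inner_le_norm a b).lt_of_ne fun heq ↦ ?_
  obtain ⟨r, -, hr⟩ := (norm_inner_eq_norm_iff (𝕜 := ℝ) ha (h.ne_zero 1)).mp heq
  exact (LinearIndependent.pair_iff' ha).mp h r hr.symm

end LinearIndependent

namespace IsAcuteSet

variable {E G : Type*} [NormedAddCommGroup E] [InnerProductSpace ℝ E]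
  [NormedAddCommGroup G] [InnerProductSpace ℝ G] {X : Finset E}

lemma map (hX : IsAcuteSet X) (φ : E →ₗᵢ[ℝ] G) :
    IsAcuteSet (X.map ⟨φ, φ.injective⟩) := by
  simp only [IsAcuteSet, Finset.forall_mem_map, Function.Embedding.coeFn_mk, ← map_sub,
    φ.inner_map_map, φ.injective.ne_iff]
  exact hX

lemma exists_pos_lt_inner (hX : IsAcuteSet X) :
    ∃ m > 0, ∀ x ∈ X, ∀ y ∈ X, ∀ z ∈ X, y ≠ x → z ≠ x → y ≠ z → m < ⟪y - x, z - x⟫ := by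
  classical
  let triples := {t ∈ X ×ˢ X ×ˢ X | t.2.1 ≠ t.1 ∧ t.2.2 ≠ t.1 ∧ t.2.1 ≠ t.2.2}
  obtain ⟨m, hm, hlt⟩ := Order.exists_between_finsets {(0 : ℝ)}
    (triples.image fun t ↦ ⟪t.2.1 - t.1, t.2.2 - t.1⟫) (by
      simp only [triples, Finset.mem_singleton, Finset.forall_mem_image, Finset.mem_filter,
        Finset.mem_product, forall_eq]
      rintro ⟨x, y, z⟩ ⟨⟨hx, hy, hz⟩, hyx, hzx, hyz⟩
      exact hX x hx y hy z hz hyx hzx hyz)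
  refine ⟨m, hm 0 (Finset.mem_singleton_self 0), fun x hx y hy z hz hyx hzx hyz ↦ ?_⟩
  exact hlt _ (Finset.mem_image_of_mem _ (a := (x, y, z)) (Finset.mem_filter.mpr
    ⟨Finset.mk_mem_product hx (Finset.mk_mem_product hy hz), hyx, hzx, hyz⟩))

end IsAcuteSet

section InnerSub

variable {F : Type*} [NormedAddCommGroup F] [InnerProductSpace ℝ F] {a b c : F} {ε : ℝ}

lemma inner_neg_sub_sub_pos (h : ⟪a, c⟫ < ‖a‖ ^ 2) : 0 < ⟪-a - a, c - a⟫ := by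
  simp only [inner_sub_left, inner_sub_right, inner_neg_left, real_inner_self_eq_norm_sq]
  linarith

lemma inner_sub_neg_sub_eq_zero (h : ‖a‖ = ‖b‖) : ⟪b - a, -b - a⟫ = 0 := by
  simp only [inner_sub_left, inner_sub_right, inner_neg_right, real_inner_self_eq_norm_sq,
    real_inner_comm a b, h]
  ring

lemma neg_two_mul_sq_lt_inner_sub_sub (ha : ‖a‖ = ε) (hab : |⟪a, b⟫| < ε ^ 2)
    (hac : |⟪a, c⟫| < ε ^ 2) (hbc : |⟪b, c⟫| < ε ^ 2) : -(2 * ε ^ 2) < ⟪b - a, c - a⟫ := by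
  simp only [inner_sub_left, inner_sub_right, real_inner_self_eq_norm_sq, real_inner_comm a b, ha]
  linarith [(abs_lt.mp hab).2, (abs_lt.mp hac).2, (abs_lt.mp hbc).1]

end InnerSub

section AntipodalLift

variable {E F : Type*}

open Classical in
/-- The *antipodal lift* of `X` along `v`: the points `(x, v x)` and `(x, -v x)` with `x ∈ X`. It
lives in `WithLp 2 (E × F)` since `E × F` itself carries the sup norm. -/
noncomputable def antipodalLift [AddGroup F] (v : E → F) (X : Finset E) :
    Finset (WithLp 2 (E × F)) :=
  X.biUnion fun x ↦ {WithLp.toLp 2 (x, v x), WithLp.toLp 2 (x, -v x)}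

namespace antipodalLift

variable {v : E → F} {X : Finset E} {p q : WithLp 2 (E × F)}

section AddGroup

variable [AddGroup F]

lemma mem_iff : p ∈ antipodalLift v X ↔ p.fst ∈ X ∧ (p.snd = v p.fst ∨ p.snd = -v p.fst) := by
  obtain ⟨x, a⟩ := p
  simp only [antipodalLift, Finset.mem_biUnion, Finset.mem_insert, Finset.mem_singleton,
    WithLp.toLp.injEq, Prod.mk.injEq, WithLp.toLp_fst, WithLp.toLp_snd]
  grind

lemma snd_eq_neg (hp : p ∈ antipodalLift v X) (hq : q ∈ antipodalLift v X)
    (hfst : q.fst = p.fst) (hne : q ≠ p) : q.snd = -p.snd := by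
  have hsnd : q.snd ≠ p.snd := fun h ↦ hne ((WithLp.ext_iff _).mpr (Prod.ext hfst h))
  have hp' := (mem_iff.mp hp).2
  have hq' := (mem_iff.mp hq).2
  rw [hfst] at hq'
  grind [neg_neg]

lemma card_eq (hv : ∀ x ∈ X, v x ≠ -v x) : (antipodalLift v X).card = 2 * X.card := by
  classical
  rw [antipodalLift, Finset.card_biUnion]
  · have card_fiber (x : E) (hx : x ∈ X) :
        ({WithLp.toLp 2 (x, v x), WithLp.toLp 2 (x, -v x)} : Finset (WithLp 2 (E × F))).card = 2 :=
      Finset.card_pair fun h ↦ hv x hx (congrArg WithLp.snd h)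
    rw [Finset.sum_congr rfl card_fiber, Finset.sum_const, smul_eq_mul, mul_comm]
  · intro x _ y _ hxy
    simp only [Finset.disjoint_left, Finset.mem_insert, Finset.mem_singleton]
    grind

end AddGroup

variable [NormedAddCommGroup F] {ε : ℝ}

lemma norm_snd_eq (hv : ∀ x ∈ X, ‖v x‖ = ε) (hp : p ∈ antipodalLift v X) : ‖p.snd‖ = ε := by
  obtain ⟨hpX, h | h⟩ := mem_iff.mp hp <;> simp only [h, norm_neg, hv _ hpX]

variable [InnerProductSpace ℝ F]

lemma abs_inner_snd_lt (hnorm : ∀ x ∈ X, ‖v x‖ = ε)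
    (hli : (X : Set E).Pairwise fun x y ↦ LinearIndependent ℝ ![v x, v y])
    (hp : p ∈ antipodalLift v X) (hq : q ∈ antipodalLift v X) (hne : p.fst ≠ q.fst) :
    |⟪p.snd, q.snd⟫| < ε ^ 2 := by
  have hpq : LinearIndependent ℝ ![p.snd, q.snd] := by
    obtain ⟨hpX, h | h⟩ := mem_iff.mp hp <;> obtain ⟨hqX, h' | h'⟩ := mem_iff.mp hq <;>
      simpa only [h, h', LinearIndependent.pair_neg_left_iff,
        LinearIndependent.pair_neg_right_iff] using hli hpX hqX hne
  simpa only [norm_snd_eq hnorm hp, norm_snd_eq hnorm hq, ← sq] using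
    abs_real_inner_lt_norm_mul_norm hpq

lemma isAcuteSet [NormedAddCommGroup E] [InnerProductSpace ℝ E]
    (hnorm : ∀ x ∈ X, ‖v x‖ = ε)
    (hli : (X : Set E).Pairwise fun x y ↦ LinearIndependent ℝ ![v x, v y])
    (hgap : ∀ x ∈ X, ∀ y ∈ X, ∀ z ∈ X, y ≠ x → z ≠ x → y ≠ z → 2 * ε ^ 2 ≤ ⟪y - x, z - x⟫) :
    IsAcuteSet (antipodalLift v X) := by
  intro p hp q hq r hr hqp hrp hqr
  change 0 < ⟪q.fst - p.fst, r.fst - p.fst⟫ + ⟪q.snd - p.snd, r.snd - p.snd⟫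
  have inner_lt {s} (hs : s ∈ antipodalLift v X) (hne : p.fst ≠ s.fst) :
      ⟪p.snd, s.snd⟫ < ‖p.snd‖ ^ 2 := by
    rw [norm_snd_eq hnorm hp]
    exact (abs_lt.mp (abs_inner_snd_lt hnorm hli hp hs hne)).2
  by_cases hqp' : q.fst = p.fst
  · have hq_neg := snd_eq_neg hp hq hqp' hqp
    have hrp' : p.fst ≠ r.fst := fun h ↦
      hqr <| (WithLp.ext_iff _).mpr <| Prod.ext (hqp'.trans h) <|
        hq_neg.trans (snd_eq_neg hp hr h.symm hrp).symm
    rw [hqp', sub_self, inner_zero_left, zero_add, hq_neg]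
    exact inner_neg_sub_sub_pos (inner_lt hr hrp')
  by_cases hrp' : r.fst = p.fst
  · rw [hrp', sub_self, inner_zero_right, zero_add, snd_eq_neg hp hr hrp' hrp, real_inner_comm]
    exact inner_neg_sub_sub_pos (inner_lt hq (Ne.symm hqp'))
  by_cases hqr' : q.fst = r.fst
  · rw [← hqr', snd_eq_neg hq hr hqr'.symm hqr.symm, inner_sub_neg_sub_eq_zero
      ((norm_snd_eq hnorm hp).trans (norm_snd_eq hnorm hq).symm), add_zero]
    exact real_inner_self_pos.mpr (sub_ne_zero.mpr hqp')
  · have hfst := hgap _ (mem_iff.mp hp).1 _ (mem_iff.mp hq).1 _ (mem_iff.mp hr).1 hqp' hrp' hqr'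
    have hsnd := neg_two_mul_sq_lt_inner_sub_sub (norm_snd_eq hnorm hp)
      (abs_inner_snd_lt hnorm hli hp hq (Ne.symm hqp'))
      (abs_inner_snd_lt hnorm hli hp hr (Ne.symm hrp')) (abs_inner_snd_lt hnorm hli hq hr hqr')
    linarith

end antipodalLift

end AntipodalLift

theorem acute_set_double_general {E F : Type*} [NormedAddCommGroup E] [InnerProductSpace ℝ E]
    [NormedAddCommGroup F] [InnerProductSpace ℝ F] (hF : 1 < Module.rank ℝ F)
    (X : Finset E) (hacute : IsAcuteSet X) :
    ∃ Y : Finset (WithLp 2 (E × F)), IsAcuteSet Y ∧ Y.card = 2 * X.card := by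
  obtain ⟨m, hm, hgap⟩ := hacute.exists_pos_lt_inner
  have hε : 0 < √(m / 2) := Real.sqrt_pos.mpr (half_pos hm)
  have two_mul_sq : 2 * √(m / 2) ^ 2 = m := by
    rw [Real.sq_sqrt (half_pos hm).le, mul_div_cancel₀ m two_ne_zero]
  obtain ⟨w, hnorm, hli⟩ := exists_norm_eq_pairwise_linearIndependent hF hε
  obtain ⟨index, hindex⟩ := Set.countable_iff_exists_injOn.mp X.countable_toSet
  refine ⟨antipodalLift (fun x ↦ w (index x)) X, antipodalLift.isAcuteSet (fun x _ ↦ hnorm _)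
    (fun x hx y hy hxy ↦ hli (Nat.cast_injective.ne (hindex.ne hx hy hxy)))
    fun x hx y hy z hz hyx hzx hyz ↦ ?_, antipodalLift.card_eq fun x _ ↦ ?_⟩
  · exact two_mul_sq.trans_le (hgap x hx y hy z hz hyx hzx hyz).le
  · have := IsAddTorsionFree.of_isTorsionFree ℝ F
    exact self_eq_neg.not.mpr (norm_ne_zero_iff.mp ((hnorm _).trans_ne hε.ne'))

/-- The identification of `ℝᵐ ⊕ ℝⁿ` with `ℝᵐ⁺ⁿ` that concatenates coordinates. -/
noncomputable def euclideanProdIsometryEquiv (m n : ℕ) :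
    WithLp 2 (EuclideanSpace ℝ (Fin m) × EuclideanSpace ℝ (Fin n)) ≃ₗᵢ[ℝ]
      EuclideanSpace ℝ (Fin (m + n)) :=
  (((EuclideanSpace.basisFun (Fin m) ℝ).prod (EuclideanSpace.basisFun (Fin n) ℝ)).reindex
    finSumFinEquiv).repr

theorem acute_set_double (d : ℕ) (hd : 1 ≤ d)
    (X : Finset (EuclideanSpace ℝ (Fin d))) (hX : X.Nonempty)
    (hacute : IsAcuteSet X) :
    ∃ Y : Finset (EuclideanSpace ℝ (Fin (d + 2))),
      IsAcuteSet Y ∧ Y.card = 2 * X.card := by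
  obtain ⟨Y, hY, hcard⟩ := acute_set_double_general
    (F := EuclideanSpace ℝ (Fin 2)) (Module.one_lt_rank_of_one_lt_finrank (by simp)) X hacute
  exact ⟨_, hY.map (euclideanProdIsometryEquiv d 2).toLinearIsometry,
    (Finset.card_map _).trans hcard⟩
end

section
/- For every integer $d \ge 4$ there exists a finite acute set $S \subseteq \mathbb{R}^d$ with $(|S| : \mathbb{R}) \ge 2^{d/2 + 1}$ (where the exponent $d/2 + 1$ is a real number). -/
open RealInnerProductSpace

/-!
Two additional dimensions allow the size of an acute set to be doubled: each point is replaced by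
a short segment centred at it, lying in a plane orthogonal to the ambient space, no two of these
segments being parallel. An angle whose vertex is joined to ends of other segments only is a small
perturbation of an angle of the original set. In any other angle one side is a segment, and its
acuteness amounts to the strict Cauchy-Schwarz inequality for two directions in the plane. It
remains to start from 8 points in dimension 4 and 12 points in dimension 5; the latter suffices
since `12 ^ 2 ≥ 2 ^ 7`.
-/

open Filter Topology

/-- The `2 * n` vectors `± u i` obtained from `n` vectors `u i`. -/
def signed {ι F : Type*} [AddCommGroup F] (u : ι → F) (p : ι × ℤˣ) : F :=
  p.2 • u p.1

theorem signed_neg {ι F : Type*} [AddCommGroup F] (u : ι → F) (i : ι) (s : ℤˣ) :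
    signed u (i, -s) = -signed u (i, s) :=
  Units.neg_smul s (u i)

theorem norm_signed {ι F : Type*} [SeminormedAddCommGroup F] (u : ι → F) (p : ι × ℤˣ) :
    ‖signed u p‖ = ‖u p.1‖ :=
  norm_units_zsmul p.2 (u p.1)

section

variable {E F ι : Type*} [NormedAddCommGroup E] [InnerProductSpace ℝ E]
  [NormedAddCommGroup F] [InnerProductSpace ℝ F]

/-- An indexed family of points in which any three points form an acute angle. The legs `j` and `k`
may coincide, which forces the points to be pairwise distinct. -/
def IsAcuteFamily (f : ι → E) : Prop :=
  ∀ ⦃i j k⦄, j ≠ i → k ≠ i → 0 < ⟪f j - f i, f k - f i⟫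

namespace IsAcuteFamily

theorem injective {f : ι → E} (hf : IsAcuteFamily f) : Function.Injective f := by
  intro i j hij
  by_contra hne
  simpa [hij] using hf (Ne.symm hne) (Ne.symm hne)

theorem isAcuteSet_map_univ [Fintype ι] {f : ι → E} (hf : IsAcuteFamily f) :
    IsAcuteSet (Finset.univ.map ⟨f, hf.injective⟩) := by
  simp only [IsAcuteSet, Finset.mem_map, Finset.mem_univ, true_and, Function.Embedding.coeFn_mk]
  rintro _ ⟨i, rfl⟩ _ ⟨j, rfl⟩ _ ⟨k, rfl⟩ hji hki -
  exact hf (ne_of_apply_ne f hji) (ne_of_apply_ne f hki)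

theorem linearIsometry_comp {f : ι → E} (hf : IsAcuteFamily f) (T : E →ₗᵢ[ℝ] F) :
    IsAcuteFamily (T ∘ f) := by
  intro i j k hji hki
  simpa only [Function.comp_apply, ← map_sub, T.inner_map_map] using hf hji hki

end IsAcuteFamily

theorem IsAcuteSet.isAcuteFamily {S : Finset E} (hS : IsAcuteSet S) :
    IsAcuteFamily ((↑) : S → E) := by
  intro x y z hyx hzx
  rw [← Subtype.coe_ne_coe] at hyx hzx
  obtain hyz | hyz := eq_or_ne (y : E) z
  · rw [hyz]
    exact real_inner_self_pos.2 (sub_ne_zero.2 hzx)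
  · exact hS x x.2 y y.2 z z.2 hyx hzx hyz

/-- The family which replaces each point `f i` of `E` by the two ends of the segment centred
at `f i` with half-length `ε` and direction `u i`, where `u i` is orthogonal to `E`. -/
def doubled (f : ι → E) (u : ι → F) (ε : ℝ) (p : ι × ℤˣ) : WithLp 2 (E × F) :=
  WithLp.toLp 2 (f p.1, ε • signed u p)

theorem inner_doubled_sub_doubled_sub (f : ι → E) (u : ι → F) (ε : ℝ) (p q r : ι × ℤˣ) :
    ⟪doubled f u ε q - doubled f u ε p, doubled f u ε r - doubled f u ε p⟫ =
      ⟪f q.1 - f p.1, f r.1 - f p.1⟫ +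
        ε ^ 2 * ⟪signed u q - signed u p, signed u r - signed u p⟫ := by
  simp only [doubled, WithLp.prod_inner_apply, WithLp.ofLp_sub, Prod.fst_sub, Prod.snd_sub,
    ← smul_sub, real_inner_smul_left, real_inner_smul_right]
  ring

theorem inner_neg_sub_self_sub_self_pos {v w : F} (hv : ‖v‖ = 1) (hw : ‖w‖ = 1) (hvw : v ≠ w) :
    0 < ⟪-v - v, w - v⟫ := by
  have hlt : ⟪v, w⟫ < 1 := (inner_lt_one_iff_real_of_norm_eq_one hv hw).2 hvw
  have hself : ⟪v, v⟫ = 1 := by rw [real_inner_self_eq_norm_sq, hv, one_pow]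
  simp only [inner_sub_left, inner_sub_right, inner_neg_left, hself]
  linarith

theorem inner_doubled_pos_of_fst_eq {f : ι → E} {u : ι → F} (hu : ∀ i, ‖u i‖ = 1)
    (hsigned : Function.Injective (signed u)) {ε : ℝ} (hε : ε ≠ 0) {p q r : ι × ℤˣ}
    (hqp : q ≠ p) (hrp : r ≠ p) (hfst : q.1 = p.1) :
    0 < ⟪doubled f u ε q - doubled f u ε p, doubled f u ε r - doubled f u ε p⟫ := by
  obtain ⟨i, s⟩ := p
  obtain ⟨j, t⟩ := q
  obtain rfl : j = i := hfst
  obtain rfl : t = -s := Int.units_ne_iff_eq_neg.1 fun h => hqp (by rw [h])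
  rw [inner_doubled_sub_doubled_sub, sub_self, inner_zero_left, zero_add, signed_neg]
  have hdir : 0 < ⟪-signed u (j, s) - signed u (j, s), signed u r - signed u (j, s)⟫ :=
    inner_neg_sub_self_sub_self_pos (by rw [norm_signed, hu]) (by rw [norm_signed, hu])
      (hsigned.ne hrp.symm)
  positivity

theorem IsAcuteFamily.eventually_inner_doubled_pos [Finite ι] {f : ι → E} (hf : IsAcuteFamily f)
    (u : ι → F) :
    ∀ᶠ ε in 𝓝 (0 : ℝ), ∀ p q r : ι × ℤˣ, q.1 ≠ p.1 → r.1 ≠ p.1 →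
      0 < ⟪doubled f u ε q - doubled f u ε p, doubled f u ε r - doubled f u ε p⟫ := by
  simp only [eventually_all, inner_doubled_sub_doubled_sub]
  intro p q r hqp hrp
  refine continuousAt_const.eventually_lt (by fun_prop) ?_
  simpa using hf hqp hrp

theorem IsAcuteFamily.exists_doubled [Finite ι] {f : ι → E} (hf : IsAcuteFamily f) {u : ι → F}
    (hu : ∀ i, ‖u i‖ = 1) (hsigned : Function.Injective (signed u)) :
    ∃ ε, IsAcuteFamily (doubled f u ε) := by
  obtain ⟨ε, hpos, hε⟩ := ((hf.eventually_inner_doubled_pos u).filter_mono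
    nhdsWithin_le_nhds |>.and (self_mem_nhdsWithin (s := {0}ᶜ))).exists
  refine ⟨ε, fun p q r hqp hrp => ?_⟩
  by_cases hq : q.1 = p.1
  · exact inner_doubled_pos_of_fst_eq hu hsigned hε hqp hrp hq
  by_cases hr : r.1 = p.1
  · rw [real_inner_comm]
    exact inner_doubled_pos_of_fst_eq hu hsigned hε hrp hqp hr
  · exact hpos p q r hq hr

end

/-- The unit vector of slope `t` in the right half-plane. -/
noncomputable def unitOfSlope (t : ℝ) : ℂ :=
  Complex.exp (Real.arctan t * Complex.I)

theorem norm_unitOfSlope (t : ℝ) : ‖unitOfSlope t‖ = 1 :=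
  Complex.norm_exp_ofReal_mul_I _

theorem im_div_re_unitOfSlope (t : ℝ) : (unitOfSlope t).im / (unitOfSlope t).re = t := by
  rw [unitOfSlope, Complex.exp_ofReal_mul_I_im, Complex.exp_ofReal_mul_I_re,
    ← Real.tan_eq_sin_div_cos, Real.tan_arctan]

theorem im_div_re_signed {ι : Type*} (u : ι → ℂ) (p : ι × ℤˣ) :
    (signed u p).im / (signed u p).re = (u p.1).im / (u p.1).re := by
  obtain ⟨i, s⟩ := p
  obtain rfl | rfl := Int.units_eq_one_or s <;> simp [signed]

theorem signed_unitOfSlope_injective : Function.Injective (signed unitOfSlope) := by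
  rintro ⟨a, s⟩ ⟨b, t⟩ h
  have hab : a = b := by
    have hslope := congrArg (fun z : ℂ => z.im / z.re) h
    simpa only [im_div_re_signed, im_div_re_unitOfSlope] using hslope
  subst hab
  have hst : s = t := by
    by_contra hne
    rw [Int.units_ne_iff_eq_neg.1 hne, signed_neg, neg_eq_self] at h
    have hnorm := norm_signed unitOfSlope (a, t)
    rw [h, norm_zero, norm_unitOfSlope] at hnorm
    exact zero_ne_one hnorm
  rw [hst]

theorem IsAcuteSet.exists_isAcuteFamily_prod_units {E : Type*} [NormedAddCommGroup E]
    [InnerProductSpace ℝ E] {S : Finset E} (hS : IsAcuteSet S) :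
    ∃ f : S × ℤˣ → WithLp 2 (E × ℂ), IsAcuteFamily f := by
  let slope : S → ℝ := fun x => (S.equivFin x : ℕ)
  have hslope : Function.Injective slope :=
    Nat.cast_injective.comp (Fin.val_injective.comp S.equivFin.injective)
  have hsigned : Function.Injective (signed (unitOfSlope ∘ slope)) :=
    signed_unitOfSlope_injective.comp (hslope.prodMap Function.injective_id)
  obtain ⟨ε, hε⟩ := hS.isAcuteFamily.exists_doubled (fun x => norm_unitOfSlope (slope x)) hsigned
  exact ⟨_, hε⟩

theorem IsAcuteSet.exists_card_eq_two_mul {d : ℕ} {S : Finset (EuclideanSpace ℝ (Fin d))}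
    (hS : IsAcuteSet S) :
    ∃ T : Finset (EuclideanSpace ℝ (Fin (d + 2))), IsAcuteSet T ∧ T.card = 2 * S.card := by
  obtain ⟨f, hf⟩ := hS.exists_isAcuteFamily_prod_units
  let coords : WithLp 2 (EuclideanSpace ℝ (Fin d) × ℂ) ≃ₗᵢ[ℝ] EuclideanSpace ℝ (Fin (d + 2)) :=
    (((EuclideanSpace.basisFun (Fin d) ℝ).prod Complex.orthonormalBasisOneI).reindex
      finSumFinEquiv).repr
  refine ⟨_, (hf.linearIsometry_comp coords.toLinearIsometry).isAcuteSet_map_univ, ?_⟩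
  simp [mul_comm]

/-- The real points with given integer coordinates. -/
def integerPoints {ι κ : Type*} (p : ι → κ → ℤ) (i : ι) : EuclideanSpace ℝ κ :=
  WithLp.toLp 2 fun t => (p i t : ℝ)

theorem inner_integerPoints_sub_sub {ι κ : Type*} [Fintype κ] (p : ι → κ → ℤ) (i j k : ι) :
    ⟪integerPoints p j - integerPoints p i, integerPoints p k - integerPoints p i⟫ =
      ((p j - p i) ⬝ᵥ (p k - p i) : ℤ) := by
  simp [integerPoints, dotProduct, PiLp.inner_apply, mul_comm]

theorem isAcuteFamily_integerPoints {ι κ : Type*} [Fintype κ] {p : ι → κ → ℤ}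
    (hp : ∀ i j k, j ≠ i → k ≠ i → 0 < (p j - p i) ⬝ᵥ (p k - p i)) :
    IsAcuteFamily (integerPoints p) := by
  intro i j k hji hki
  rw [inner_integerPoints_sub_sub]
  exact_mod_cast hp i j k hji hki

theorem exists_isAcuteSet_four_card_eq_eight :
    ∃ S : Finset (EuclideanSpace ℝ (Fin 4)), IsAcuteSet S ∧ S.card = 8 := by
  -- The coordinates here and in dimension 5 were found by simulated annealing.
  let p : Fin 8 → Fin 4 → ℤ :=
    ![![10, 12, 11, 6], ![1, 8, 6, 12], ![8, 0, 10, 6], ![9, 5, 9, 0],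
      ![11, 10, 0, 7], ![0, 12, 10, 6], ![4, 6, 0, 4], ![10, 7, 10, 12]]
  have hp : IsAcuteFamily (integerPoints p) := isAcuteFamily_integerPoints (by decide +kernel)
  exact ⟨_, hp.isAcuteSet_map_univ, by simp⟩

theorem exists_isAcuteSet_five_card_eq_twelve :
    ∃ S : Finset (EuclideanSpace ℝ (Fin 5)), IsAcuteSet S ∧ S.card = 12 := by
  let p : Fin 12 → Fin 5 → ℤ :=
    ![![2, 6, 9, 10, 9], ![10, 7, 8, 13, 1], ![13, 11, 2, 8, 4], ![11, 13, 9, 5, 6],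
      ![11, 3, 2, 6, 8], ![3, 10, 3, 13, 0], ![6, 13, 0, 11, 7], ![6, 5, 2, 13, 11],
      ![3, 12, 4, 4, 8], ![7, 3, 9, 7, 3], ![3, 8, 4, 4, 0], ![8, 12, 11, 13, 7]]
  have hp : IsAcuteFamily (integerPoints p) := isAcuteFamily_integerPoints (by decide +kernel)
  exact ⟨_, hp.isAcuteSet_map_univ, by simp⟩

theorem two_rpow_five_halves_add_one_le_twelve : (2 : ℝ) ^ ((5 : ℝ) / 2 + 1) ≤ 12 :=
  calc (2 : ℝ) ^ ((5 : ℝ) / 2 + 1)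
      = √(2 ^ 7) := by
        rw [Real.sqrt_eq_rpow, ← Real.rpow_natCast, ← Real.rpow_mul two_pos.le]
        norm_num
    _ ≤ 12 := Real.sqrt_le_iff.2 (by norm_num)

theorem acute_set_exponential (d : ℕ) (hd : 4 ≤ d) :
    ∃ S : Finset (EuclideanSpace ℝ (Fin d)),
      IsAcuteSet S ∧ (S.card : ℝ) ≥ (2 : ℝ) ^ ((d : ℝ) / 2 + 1) := by
  obtain ⟨k, rfl⟩ := Nat.exists_eq_add_of_le hd
  induction k using Nat.twoStepInduction with
  | zero =>
    obtain ⟨S, hS, hcard⟩ := exists_isAcuteSet_four_card_eq_eight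
    exact ⟨S, hS, by rw [hcard]; norm_num⟩
  | one =>
    obtain ⟨S, hS, hcard⟩ := exists_isAcuteSet_five_card_eq_twelve
    exact ⟨S, hS, by rw [hcard]; exact_mod_cast two_rpow_five_halves_add_one_le_twelve⟩
  | more k ih _ =>
    obtain ⟨S, hS, hcard⟩ := ih (Nat.le_add_right 4 k)
    obtain ⟨T, hT, hTcard⟩ := hS.exists_card_eq_two_mul
    refine ⟨T, hT, ?_⟩
    calc (2 : ℝ) ^ (((4 + (k + 2) : ℕ) : ℝ) / 2 + 1)
        = 2 ^ (((4 + k : ℕ) : ℝ) / 2 + 1 + 1) := by push_cast; ring_nf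
      _ = 2 * 2 ^ (((4 + k : ℕ) : ℝ) / 2 + 1) := by
        rw [Real.rpow_add_one two_ne_zero, mul_comm]
      _ ≤ T.card := by rw [hTcard, Nat.cast_mul, Nat.cast_two]; gcongr
end
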